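/- Let $n \ge 1$ and let $a_1, \dots, a_n \in \mathbb{R}^n$ be linearly independent unit vectors forming the rows of a matrix $A$, and suppose every $(n-1)\times(n-1)$ sub-determinant of $A$ has absolute value at most $\Delta$ for some $\Delta > 0$. For each $i$, let $F_i$ denote the linear span of $\{a_j : j \ne i\}$. Then $\sum_{i=1}^{n} \frac{1}{\mathrm{dist}(a_i, F_i)} \le \frac{n^{1.5}\, \Delta}{|\det A|}$, where $\mathrm{dist}(a_i, F_i)$ is the Euclidean distance from $a_i$ to $F_i$. -/

import Mathlib

open Matrix Metric

open WithLp (toLp)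
open scoped InnerProductSpace

/-! Column `i` of the adjugate of `A` is, up to conjugation, orthogonal to every row except row `i`,
with which it pairs to `det A`. By Cauchy–Schwarz the distance from row `i` to the span of the
other rows is therefore at least `|det A|` divided by the norm of that column, and the `n` entries
of the column are signed `(n-1) × (n-1)` minors, so its norm is at most `√n * Δ`. -/

section Height

variable {𝕜 E ι : Type*} [RCLike 𝕜] [NormedAddCommGroup E] [InnerProductSpace 𝕜 E]

theorem norm_inner_le_infDist_mul_norm {S : Submodule 𝕜 E} {w : E} (hw : w ∈ Sᗮ) (x : E) :
    ‖⟪w, x⟫_𝕜‖ ≤ infDist x S * ‖w‖ := by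
  rcases eq_or_ne w 0 with rfl | hw0
  · simp
  have hwpos : 0 < ‖w‖ := norm_pos_iff.mpr hw0
  rw [← div_le_iff₀ hwpos, le_infDist S.nonempty]
  intro y hy
  rw [div_le_iff₀ hwpos]
  calc ‖⟪w, x⟫_𝕜‖ = ‖⟪w, x - y⟫_𝕜‖ := by
        rw [inner_sub_right, S.inner_left_of_mem_orthogonal hy hw, sub_zero]
    _ ≤ ‖w‖ * ‖x - y‖ := norm_inner_le_norm w (x - y)
    _ = dist x y * ‖w‖ := by rw [dist_eq_norm, mul_comm]

variable (𝕜) in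
/-- The height of the simplicial cone generated by the family `a` over its facet opposite to the
generator `a i`: the distance from `a i` to the `𝕜`-linear span of the other generators. -/
noncomputable def facetHeight (a : ι → E) (i : ι) : ℝ :=
  infDist (a i) (Submodule.span 𝕜 {v | ∃ j, j ≠ i ∧ v = a j} : Set E)

theorem norm_inner_le_facetHeight_mul_norm {a : ι → E} {i : ι} {w : E}
    (hw : ∀ j, j ≠ i → ⟪w, a j⟫_𝕜 = 0) : ‖⟪w, a i⟫_𝕜‖ ≤ facetHeight 𝕜 a i * ‖w‖ := by
  have horth : (𝕜 ∙ w) ⟂ Submodule.span 𝕜 {v | ∃ j, j ≠ i ∧ v = a j} := by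
    rw [Submodule.isOrtho_span]
    rintro _ rfl _ ⟨j, hj, rfl⟩
    exact hw j hj
  exact norm_inner_le_infDist_mul_norm (horth (Submodule.mem_span_singleton_self w)) (a i)

end Height

section Adjugate

variable {𝕜 ι : Type*} [RCLike 𝕜] [Fintype ι] [DecidableEq ι]

theorem inner_star_adjugate_col_row (A : Matrix ι ι 𝕜) (i j : ι) :
    ⟪toLp 2 (star (A.adjugate.col i)), toLp 2 (A j)⟫_𝕜 = if j = i then A.det else 0 := by
  calc ⟪toLp 2 (star (A.adjugate.col i)), toLp 2 (A j)⟫_𝕜 = (A * A.adjugate) j i := by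
        rw [EuclideanSpace.inner_toLp_toLp, star_star]; rfl
    _ = if j = i then A.det else 0 := by
        simp [mul_adjugate, Matrix.one_apply]

theorem norm_det_le_facetHeight_mul_norm_adjugate_col (A : Matrix ι ι 𝕜) (i : ι) :
    ‖A.det‖ ≤ facetHeight 𝕜 (fun j ↦ toLp 2 (A j)) i * ‖toLp 2 (A.adjugate.col i)‖ := by
  have horth : ∀ j, j ≠ i → ⟪toLp 2 (star (A.adjugate.col i)), toLp 2 (A j)⟫_𝕜 = 0 :=
    fun j hj ↦ by rw [inner_star_adjugate_col_row, if_neg hj]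
  have hstar : ‖toLp 2 (star (A.adjugate.col i))‖ = ‖toLp 2 (A.adjugate.col i)‖ := by
    simp [EuclideanSpace.norm_eq]
  simpa only [inner_star_adjugate_col_row, if_true, hstar] using
    norm_inner_le_facetHeight_mul_norm horth

theorem one_div_facetHeight_le {A : Matrix ι ι 𝕜} (hdet : A.det ≠ 0) (i : ι) :
    1 / facetHeight 𝕜 (fun j ↦ toLp 2 (A j)) i ≤ ‖toLp 2 (A.adjugate.col i)‖ / ‖A.det‖ := by
  have hdet_pos : 0 < ‖A.det‖ := norm_pos_iff.mpr hdet
  have hle := norm_det_le_facetHeight_mul_norm_adjugate_col A i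
  have hheight_pos : 0 < facetHeight 𝕜 (fun j ↦ toLp 2 (A j)) i :=
    pos_of_mul_pos_left (hdet_pos.trans_le hle) (norm_nonneg _)
  rwa [div_le_div_iff₀ hheight_pos hdet_pos, one_mul, mul_comm]

end Adjugate

theorem norm_adjugate_fin_succ {R : Type*} [SeminormedCommRing R] {m : ℕ}
    (A : Matrix (Fin (m + 1)) (Fin (m + 1)) R) (i j : Fin (m + 1)) :
    ‖A.adjugate i j‖ = ‖(A.submatrix j.succAbove i.succAbove).det‖ := by
  rw [adjugate_fin_succ_eq_det_submatrix]
  rcases neg_one_pow_eq_or R (j + i : ℕ) with hsign | hsign <;> simp [hsign]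

theorem norm_adjugate_le_of_forall_minor {R : Type*} [SeminormedCommRing R] {n : ℕ}
    {A : Matrix (Fin n) (Fin n) R} {Δ : ℝ}
    (hminor : ∀ r c : Fin (n - 1) → Fin n, Function.Injective r → Function.Injective c →
      ‖(A.submatrix r c).det‖ ≤ Δ) (i j : Fin n) : ‖A.adjugate i j‖ ≤ Δ := by
  cases n with
  | zero => exact i.elim0
  | succ m =>
    rw [norm_adjugate_fin_succ]
    exact hminor _ _ Fin.succAbove_right_injective Fin.succAbove_right_injective

theorem norm_toLp_two_le_sqrt_card_mul {ι : Type*} [Fintype ι] {β : ι → Type*}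
    [∀ i, SeminormedAddCommGroup (β i)] {x : ∀ i, β i} {C : ℝ} (hC : 0 ≤ C)
    (hx : ∀ i, ‖x i‖ ≤ C) : ‖toLp 2 x‖ ≤ √(Fintype.card ι) * C := by
  rw [PiLp.norm_eq_of_L2, Real.sqrt_le_left (by positivity), mul_pow,
    Real.sq_sqrt (Nat.cast_nonneg _)]
  calc ∑ i, ‖x i‖ ^ 2 ≤ ∑ _i : ι, C ^ 2 := by gcongr with i; exact hx i
    _ = Fintype.card ι * C ^ 2 := by simp

theorem det_ne_zero_of_linearIndependent_toLp {K ι : Type*} [Field K] [Fintype ι]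
    [DecidableEq ι] {p : ENNReal} {A : Matrix ι ι K}
    (hlin : LinearIndependent K fun i ↦ toLp p (A i)) : A.det ≠ 0 := by
  have hrows : LinearIndependent K A.row :=
    hlin.map' (WithLp.linearEquiv p K (ι → K)).toLinearMap (LinearEquiv.ker _)
  exact ((isUnit_iff_isUnit_det A).mp (linearIndependent_rows_iff_isUnit.mp hrows)).ne_zero

theorem rpow_one_and_half {x : ℝ} (hx : 0 ≤ x) : x ^ (1.5 : ℝ) = x * √x := by
  rw [Real.sqrt_eq_rpow, ← Real.rpow_one_add' hx (by norm_num)]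
  norm_num

theorem sum_inv_heights_le_general {𝕜 : Type*} [RCLike 𝕜] {n : ℕ}
    {A : Matrix (Fin n) (Fin n) 𝕜} (hlin : LinearIndependent 𝕜 fun i ↦ toLp 2 (A i)) {Δ : ℝ}
    (hsub : ∀ r c : Fin (n - 1) → Fin n, Function.Injective r → Function.Injective c →
      ‖(A.submatrix r c).det‖ ≤ Δ) :
    ∑ i, 1 / facetHeight 𝕜 (fun j ↦ toLp 2 (A j)) i ≤ (n : ℝ) ^ (1.5 : ℝ) * Δ / ‖A.det‖ := by
  have hdet : A.det ≠ 0 := det_ne_zero_of_linearIndependent_toLp hlin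
  have hadj : ∀ i j, ‖A.adjugate i j‖ ≤ Δ := norm_adjugate_le_of_forall_minor hsub
  have hcol : ∀ i, ‖toLp 2 (A.adjugate.col i)‖ ≤ √n * Δ := fun i ↦ by
    simpa only [Fintype.card_fin] using
      norm_toLp_two_le_sqrt_card_mul (x := A.adjugate.col i) ((norm_nonneg _).trans (hadj i i))
        fun k ↦ hadj k i
  calc ∑ i, 1 / facetHeight 𝕜 (fun j ↦ toLp 2 (A j)) i
      ≤ ∑ i, ‖toLp 2 (A.adjugate.col i)‖ / ‖A.det‖ :=
        Finset.sum_le_sum fun i _ ↦ one_div_facetHeight_le hdet i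
    _ ≤ ∑ _i : Fin n, √n * Δ / ‖A.det‖ := by gcongr with i; exact hcol i
    _ = (n : ℝ) ^ (1.5 : ℝ) * Δ / ‖A.det‖ := by
        rw [rpow_one_and_half n.cast_nonneg, Fin.sum_const, nsmul_eq_mul]
        ring

/-- For linearly independent unit rows `a 0, …, a (n-1)` of an `n × n` real
matrix `A` all of whose `(n-1) × (n-1)` sub-determinants are bounded in
absolute value by `Δ > 0`, the sum over `i` of the reciprocals of the
distances from `a i` to the span of the remaining rows is at most
`n^{1.5} Δ / |det A|`. -/
theorem sum_inv_heights_le (n : ℕ) (hn : 1 ≤ n) (A : Matrix (Fin n) (Fin n) ℝ)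
    (hunit : ∀ i, ‖(WithLp.equiv 2 (Fin n → ℝ)).symm (A i)‖ = 1)
    (hlin : LinearIndependent ℝ fun i => (WithLp.equiv 2 (Fin n → ℝ)).symm (A i))
    (Δ : ℝ) (hΔ : 0 < Δ)
    (hsub : ∀ (r c : Fin (n - 1) → Fin n), Function.Injective r →
      Function.Injective c → |(A.submatrix r c).det| ≤ Δ) :
    ∑ i : Fin n,
        1 / Metric.infDist ((WithLp.equiv 2 (Fin n → ℝ)).symm (A i))
          (Submodule.span ℝ
            {v | ∃ j : Fin n, j ≠ i ∧ v = (WithLp.equiv 2 (Fin n → ℝ)).symm (A j)} :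
            Set (EuclideanSpace ℝ (Fin n))) ≤
      (n : ℝ) ^ (1.5 : ℝ) * Δ / |A.det| :=
  sum_inv_heights_le_general hlin hsub
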